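/- Let k be a positive integer, let G be a finite simple graph, let I ⊆ V(G), let P be an I-connected path decomposition of G of width at most k−1, and let S and S' be bottlenecks of G. If P is S'-structured, then S and S' are well-nested in P, i.e., I(S',P) ⊊ I(S,P), or I(S,P) ⊆ I(S',P), or I(S,P) ∩ I(S',P) = ∅. -/

import Mathlib

/-!
Suppose that the intervals of `S` and `S'` meet but neither contains the other. Then an endpoint of
the interval of `S` lies in that of `S'`, and an in-branch `H` of `S` reaching this endpoint must
change within the interval of `S'`, since `H` lives inside the interval of `S`. As only in-branches
change within the interval of an `S'`-structured decomposition, `H` meets an in-branch `K` of `S'`.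
In-branches of `S'` are disjoint from `S`, because `S` is contained in a bag outside the interval of
`S'`; and some in-branch `L` of `S'` is not contained in `H`, because it leaves the interval of `S`.

Connectedness of `K` now gives `K ⊆ H`. A vertex of `S' \ S` is adjacent to `K`, so it lies in `H`;
it is also adjacent to `L`, which would put `L` inside `H`. Hence `S' ⊆ S`, so `H ⊆ K` as well, and
`S = N(H) = N(K) = S'`, which is absurd.

That the intervals are meaningful at all, i.e. that a bottleneck has an in-branch, is a counting
argument: the branches whose first bag misses part of `S` all meet the latest of their first bags,
so there are at most `k` of them, and likewise for last bags.
-/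

open SimpleGraph

variable {V : Type*}

/-- `N_G(Y)`: the set of vertices outside `Y` having a neighbor in `Y`. -/
def nbhdSet (G : SimpleGraph V) (Y : Set V) : Set V :=
  {v | v ∉ Y ∧ ∃ u ∈ Y, G.Adj u v}

/-- `C` is a connected component of the subgraph of `G` induced by `U`. -/
def IsCompIn (G : SimpleGraph V) (U C : Set V) : Prop :=
  C.Nonempty ∧ C ⊆ U ∧ (G.induce C).Connected ∧
    ∀ u ∈ C, ∀ v ∈ U, G.Adj u v → v ∈ C

/-- `C` is a connected component of `G - S`. -/
def IsCompOf (G : SimpleGraph V) (S C : Set V) : Prop :=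
  IsCompIn G Sᶜ C

/-- `C` is an `S`-branch: a connected component of `G - S` with `N_G(C) = S`. -/
def IsBranch (G : SimpleGraph V) (S C : Set V) : Prop :=
  IsCompOf G S C ∧ nbhdSet G C = S

/-- `S` is a bottleneck (for the width parameter `k`): a nonempty set with
at least `2k+1` `S`-branches. -/
def IsBottleneck (G : SimpleGraph V) (k : ℕ) (S : Set V) : Prop :=
  S.Nonempty ∧ 2 * k + 1 ≤ {C : Set V | IsBranch G S C}.ncard

/-- `(X 0, …, X (l-1))` is a path decomposition of `G`. -/
def IsPathDecomp (G : SimpleGraph V) (l : ℕ) (X : ℕ → Set V) : Prop :=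
  (∀ v, ∃ i < l, v ∈ X i) ∧
  (∀ u v, G.Adj u v → ∃ i < l, u ∈ X i ∧ v ∈ X i) ∧
  (∀ i j m, i ≤ j → j ≤ m → m < l → X i ∩ X m ⊆ X j)

/-- The width of a path decomposition: the maximum bag size minus one. -/
noncomputable def pdWidth (l : ℕ) (X : ℕ → Set V) : ℕ :=
  ((Finset.range l).sup fun i => (X i).ncard) - 1

/-- The set of indices of bags meeting the vertex set `C`. -/
def supp (l : ℕ) (X : ℕ → Set V) (C : Set V) : Set ℕ :=
  {t | t < l ∧ (C ∩ X t).Nonempty}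

/-- `a(C)`: the first index of a bag meeting `C`. -/
noncomputable def firstIdx (l : ℕ) (X : ℕ → Set V) (C : Set V) : ℕ :=
  sInf (supp l X C)

/-- `b(C)`: the last index of a bag meeting `C`. -/
noncomputable def lastIdx (l : ℕ) (X : ℕ → Set V) (C : Set V) : ℕ :=
  sSup (supp l X C)

/-- `C` is an in-branch of `S` with respect to the decomposition:
an `S`-branch with `S ⊆ X (a C)` and `S ⊆ X (b C)`. -/
def IsInBranch (G : SimpleGraph V) (l : ℕ) (X : ℕ → Set V) (S C : Set V) : Prop :=
  IsBranch G S C ∧ S ⊆ X (firstIdx l X C) ∧ S ⊆ X (lastIdx l X C)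

/-- `α(S)`: the minimum of `a(H)` over in-branches `H` of `S`. -/
noncomputable def botStart (G : SimpleGraph V) (l : ℕ) (X : ℕ → Set V) (S : Set V) : ℕ :=
  sInf {i | ∃ C, IsInBranch G l X S C ∧ i = firstIdx l X C}

/-- `β(S)`: the maximum of `b(H)` over in-branches `H` of `S`. -/
noncomputable def botEnd (G : SimpleGraph V) (l : ℕ) (X : ℕ → Set V) (S : Set V) : ℕ :=
  sSup {i | ∃ C, IsInBranch G l X S C ∧ i = lastIdx l X C}

/-- The interval `I(S,P) = [α(S), β(S)]` of a bottleneck `S`. -/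
noncomputable def botInterval (G : SimpleGraph V) (l : ℕ) (X : ℕ → Set V) (S : Set V) : Set ℕ :=
  Set.Icc (botStart G l X S) (botEnd G l X S)

/-- A pre-branch of `S`. -/
def IsPreBranch (G : SimpleGraph V) (l : ℕ) (X : ℕ → Set V) (S C : Set V) : Prop :=
  IsBranch G S C ∧ ¬ IsInBranch G l X S C ∧ firstIdx l X C < botStart G l X S

/-- A post-branch of `S`. -/
def IsPostBranch (G : SimpleGraph V) (l : ℕ) (X : ℕ → Set V) (S C : Set V) : Prop :=
  IsBranch G S C ∧ ¬ IsInBranch G l X S C ∧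
    botStart G l X S ≤ firstIdx l X C ∧ botEnd G l X S < lastIdx l X C

/-- `C` waits in the interval `[i, j]` of the decomposition. -/
def WaitsIn (X : ℕ → Set V) (C : Set V) (i j : ℕ) : Prop :=
  ∀ t, i ≤ t → t ≤ j → C ∩ X t = C ∩ X i

/-- The decomposition is `S`-structured: every component of `G - S` that is not an
`S`-branch, and every pre- or post-branch of `S`, waits in `I(S,P)`. -/
def IsStructured (G : SimpleGraph V) (l : ℕ) (X : ℕ → Set V) (S : Set V) : Prop :=
  ∀ C : Set V,
    ((IsCompOf G S C ∧ ¬ IsBranch G S C) ∨ IsPreBranch G l X S C ∨ IsPostBranch G l X S C) →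
    WaitsIn X C (botStart G l X S) (botEnd G l X S)

/-- The decomposition is `I`-connected: every connected component of the subgraph
induced by any prefix of bags contains a vertex of `I`. -/
def IsIConn (G : SimpleGraph V) (l : ℕ) (X : ℕ → Set V) (I : Set V) : Prop :=
  ∀ i < l, ∀ C : Set V, IsCompIn G {v | ∃ j ≤ i, v ∈ X j} C → (C ∩ I).Nonempty

section Components

variable {G : SimpleGraph V} {U A C D S S' : Set V}

lemma subset_of_preconnected_of_adj_closed (hA : (G.induce A).Preconnected)
    (hAC : (A ∩ C).Nonempty) (hclosed : ∀ u ∈ A ∩ C, ∀ w ∈ A, G.Adj u w → w ∈ C) : A ⊆ C := by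
  obtain ⟨v, hvA, hvC⟩ := hAC
  intro w hwA
  by_contra hwC
  obtain ⟨p⟩ := hA ⟨v, hvA⟩ ⟨w, hwA⟩
  obtain ⟨d, -, hfst, hsnd⟩ := p.exists_boundary_dart (Subtype.val ⁻¹' C) hvC hwC
  exact hsnd (hclosed d.fst ⟨d.fst.2, hfst⟩ d.snd d.snd.2 d.adj)

lemma IsCompIn.mem_of_adj (hC : IsCompIn G U C) {u v : V} (hu : u ∈ C) (hv : v ∈ U)
    (huv : G.Adj u v) : v ∈ C :=
  hC.2.2.2 u hu v hv huv

lemma IsCompIn.connected (hC : IsCompIn G U C) : (G.induce C).Connected :=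
  hC.2.2.1

lemma IsCompIn.subset_of_preconnected (hC : IsCompIn G U C) (hA : (G.induce A).Preconnected)
    (hAU : A ⊆ U) (hAC : (A ∩ C).Nonempty) : A ⊆ C :=
  subset_of_preconnected_of_adj_closed hA hAC fun _ hu _ hw => hC.mem_of_adj hu.2 (hAU hw)

lemma IsCompIn.eq_of_inter_nonempty (hC : IsCompIn G U C) (hD : IsCompIn G U D)
    (h : (C ∩ D).Nonempty) : C = D :=
  (hD.subset_of_preconnected hC.connected.preconnected hC.2.1 h).antisymm
    (hC.subset_of_preconnected hD.connected.preconnected hD.2.1 (Set.inter_comm C D ▸ h))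

lemma exists_isCompIn_mem (G : SimpleGraph V) {v : V} (hv : v ∈ U) :
    ∃ C, IsCompIn G U C ∧ v ∈ C := by
  -- The component is the union of all connected subsets of `U` containing `v`.
  let F : Set (Set V) := {A | v ∈ A ∧ A ⊆ U ∧ (G.induce A).Connected}
  have hsingleton : {v} ∈ F :=
    ⟨rfl, Set.singleton_subset_iff.2 hv, ⟨Preconnected.of_subsingleton⟩⟩
  have hvF : v ∈ ⋃₀ F := ⟨{v}, hsingleton, rfl⟩
  have hconn : (G.induce (⋃₀ F)).Connected :=
    induce_sUnion_connected_of_pairwise_not_disjoint ⟨_, hsingleton⟩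
      (fun hs ht => ⟨v, hs.1, ht.1⟩) (fun hs => hs.2.2)
  refine ⟨⋃₀ F, ⟨⟨v, hvF⟩, Set.sUnion_subset fun A hA => hA.2.1, hconn, ?_⟩, hvF⟩
  rintro u ⟨A, ⟨hvA, hAU, hA⟩, huA⟩ w hw huw
  have hAw : (G.induce (A ∪ {u, w})).Connected :=
    induce_union_connected hA.preconnected
      (induce_pair_connected_of_adj huw).preconnected ⟨u, huA, Or.inl rfl⟩
  have hAwU : A ∪ {u, w} ⊆ U :=
    Set.union_subset hAU (Set.pair_subset (hAU huA) hw)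
  exact ⟨A ∪ {u, w}, ⟨Or.inl hvA, hAwU, hAw⟩, by simp⟩

lemma IsBranch.exists_adj (hC : IsBranch G S C) {s : V} (hs : s ∈ S) : ∃ u ∈ C, G.Adj u s := by
  rw [← hC.2] at hs
  exact hs.2

lemma IsBranch.nonempty (hC : IsBranch G S C) : C.Nonempty :=
  hC.1.1

lemma IsBranch.preconnected (hC : IsBranch G S C) : (G.induce C).Preconnected :=
  hC.1.connected.preconnected

lemma IsBranch.eq_of_inter_nonempty_of_not_subset {H K L : Set V} (hH : IsBranch G S H)
    (hK : IsBranch G S' K) (hL : IsBranch G S' L) (hKS : K ⊆ Sᶜ) (hLS : L ⊆ Sᶜ)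
    (hHK : (H ∩ K).Nonempty) (hLH : ¬ L ⊆ H) : S = S' := by
  have hKH : K ⊆ H :=
    hH.1.subset_of_preconnected hK.preconnected hKS (Set.inter_comm H K ▸ hHK)
  have hS'S : S' ⊆ S := by
    intro s hs
    by_contra hsS
    obtain ⟨u, huK, hus⟩ := hK.exists_adj hs
    obtain ⟨w, hwL, hws⟩ := hL.exists_adj hs
    have hsH : s ∈ H := hH.1.mem_of_adj (hKH huK) hsS hus
    have hwH : w ∈ H := hH.1.mem_of_adj hsH (hLS hwL) hws.symm
    exact hLH (hH.1.subset_of_preconnected hL.preconnected hLS ⟨w, hwL, hwH⟩)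
  have hHK : H ⊆ K :=
    hK.1.subset_of_preconnected hH.preconnected
      (hH.1.2.1.trans (Set.compl_subset_compl.2 hS'S)) hHK
  rw [← hH.2, ← hK.2, hHK.antisymm hKH]

end Components

section Support

variable {G : SimpleGraph V} {l : ℕ} {X : ℕ → Set V} {S C D : Set V} {t : ℕ}

lemma supp_mono (h : C ⊆ D) : supp l X C ⊆ supp l X D :=
  fun _ ht => ⟨ht.1, ht.2.mono (Set.inter_subset_inter_left _ h)⟩

lemma bddAbove_supp (l : ℕ) (X : ℕ → Set V) (C : Set V) : BddAbove (supp l X C) :=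
  ⟨l, fun _ h => h.1.le⟩

lemma firstIdx_le (h : t ∈ supp l X C) : firstIdx l X C ≤ t :=
  Nat.sInf_le h

lemma le_lastIdx (h : t ∈ supp l X C) : t ≤ lastIdx l X C :=
  le_csSup (bddAbove_supp l X C) h

lemma lastIdx_le (l : ℕ) (X : ℕ → Set V) (C : Set V) : lastIdx l X C ≤ l :=
  csSup_le' fun _ h => h.1.le

namespace IsPathDecomp

variable (hP : IsPathDecomp G l X)
include hP

lemma mem_bag_of_le_of_le {v : V} {i j m : ℕ} (hi : v ∈ X i) (hm : v ∈ X m) (hml : m < l)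
    (hij : i ≤ j) (hjm : j ≤ m) : v ∈ X j :=
  hP.2.2 i j m hij hjm hml ⟨hi, hm⟩

lemma supp_nonempty (hC : C.Nonempty) : (supp l X C).Nonempty := by
  obtain ⟨v, hv⟩ := hC
  obtain ⟨i, hi, hvi⟩ := hP.1 v
  exact ⟨i, hi, v, hv, hvi⟩

lemma firstIdx_mem_supp (hC : C.Nonempty) : firstIdx l X C ∈ supp l X C :=
  Nat.sInf_mem (hP.supp_nonempty hC)

lemma lastIdx_mem_supp (hC : C.Nonempty) : lastIdx l X C ∈ supp l X C :=
  Nat.sSup_mem (hP.supp_nonempty hC) (bddAbove_supp l X C)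

lemma ordConnected_supp (hC : (G.induce C).Preconnected) : (supp l X C).OrdConnected := by
  refine ⟨fun i ⟨_, v, hvC, hvi⟩ m ⟨hml, w, hwC, hwm⟩ j ⟨hij, hjm⟩ => ?_⟩
  refine ⟨hjm.trans_lt hml, ?_⟩
  by_contra hempty
  have hnotMem : ∀ u ∈ C, u ∉ X j := fun u huC huj => hempty ⟨u, huC, huj⟩
  have hvi' : i < j := hij.lt_of_ne fun h => hnotMem v hvC (h ▸ hvi)
  -- No edge of `C` leads from the bags before `j` to the bags after `j`.
  have hleft : C ⊆ {u | ∃ t < j, u ∈ X t} := by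
    refine subset_of_preconnected_of_adj_closed hC ⟨v, hvC, i, hvi', hvi⟩ ?_
    rintro u ⟨huC, t, htj, hut⟩ x - hux
    obtain ⟨r, hrl, hur, hxr⟩ := hP.2.1 u x hux
    refine ⟨r, ?_, hxr⟩
    by_contra! hjr
    exact hnotMem u huC (hP.mem_bag_of_le_of_le hut hur hrl htj.le hjr)
  obtain ⟨t, htj, hwt⟩ := hleft hwC
  exact hnotMem w hwC (hP.mem_bag_of_le_of_le hwt hwm hml htj.le hjm)

lemma exists_mem_supp_of_isBranch (hC : IsBranch G S C) {s : V} (hs : s ∈ S) :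
    ∃ t ∈ supp l X C, s ∈ X t := by
  obtain ⟨u, huC, hus⟩ := hC.exists_adj hs
  obtain ⟨t, htl, hut, hst⟩ := hP.2.1 u s hus
  exact ⟨t, ⟨htl, u, huC, hut⟩, hst⟩

end IsPathDecomp

end Support

section InBranches

variable {G : SimpleGraph V} {l : ℕ} {X : ℕ → Set V} {S C : Set V}

lemma bddAbove_lastIdx_isInBranch (G : SimpleGraph V) (l : ℕ) (X : ℕ → Set V) (S : Set V) :
    BddAbove {i | ∃ C, IsInBranch G l X S C ∧ i = lastIdx l X C} := by
  refine ⟨l, ?_⟩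
  rintro _ ⟨C, -, rfl⟩
  exact lastIdx_le l X C

lemma IsInBranch.botStart_le_firstIdx (hC : IsInBranch G l X S C) :
    botStart G l X S ≤ firstIdx l X C :=
  Nat.sInf_le ⟨C, hC, rfl⟩

lemma IsInBranch.lastIdx_le_botEnd (hC : IsInBranch G l X S C) :
    lastIdx l X C ≤ botEnd G l X S :=
  le_csSup (bddAbove_lastIdx_isInBranch G l X S) ⟨C, hC, rfl⟩

lemma IsInBranch.supp_subset_botInterval (hC : IsInBranch G l X S C) :
    supp l X C ⊆ botInterval G l X S :=
  fun _ ht => ⟨hC.botStart_le_firstIdx.trans (firstIdx_le ht),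
    (le_lastIdx ht).trans hC.lastIdx_le_botEnd⟩

lemma exists_isInBranch_firstIdx_eq_botStart (hS : ∃ C, IsInBranch G l X S C) :
    ∃ C, IsInBranch G l X S C ∧ firstIdx l X C = botStart G l X S := by
  obtain ⟨C, hC⟩ := hS
  obtain ⟨D, hD, h⟩ := Nat.sInf_mem
    (s := {i | ∃ C, IsInBranch G l X S C ∧ i = firstIdx l X C}) ⟨_, C, hC, rfl⟩
  exact ⟨D, hD, h.symm⟩

lemma exists_isInBranch_lastIdx_eq_botEnd (hS : ∃ C, IsInBranch G l X S C) :
    ∃ C, IsInBranch G l X S C ∧ lastIdx l X C = botEnd G l X S := by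
  obtain ⟨C, hC⟩ := hS
  obtain ⟨D, hD, h⟩ := Nat.sSup_mem
    (s := {i | ∃ C, IsInBranch G l X S C ∧ i = lastIdx l X C}) ⟨_, C, hC, rfl⟩
    (bddAbove_lastIdx_isInBranch G l X S)
  exact ⟨D, hD, h.symm⟩

namespace IsPathDecomp

variable (hP : IsPathDecomp G l X)
include hP

lemma exists_isInBranch_botStart_mem_supp (hS : ∃ C, IsInBranch G l X S C) :
    ∃ C, IsInBranch G l X S C ∧ botStart G l X S ∈ supp l X C := by
  obtain ⟨C, hC, h⟩ := exists_isInBranch_firstIdx_eq_botStart hS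
  exact ⟨C, hC, h ▸ hP.firstIdx_mem_supp hC.1.nonempty⟩

lemma exists_isInBranch_botEnd_mem_supp (hS : ∃ C, IsInBranch G l X S C) :
    ∃ C, IsInBranch G l X S C ∧ botEnd G l X S ∈ supp l X C := by
  obtain ⟨C, hC, h⟩ := exists_isInBranch_lastIdx_eq_botEnd hS
  exact ⟨C, hC, h ▸ hP.lastIdx_mem_supp hC.1.nonempty⟩

lemma botInterval_subset_Iio (hS : ∃ C, IsInBranch G l X S C) :
    botInterval G l X S ⊆ Set.Iio l := by
  obtain ⟨C, -, hC⟩ := hP.exists_isInBranch_botEnd_mem_supp hS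
  exact fun _ ht => ht.2.trans_lt hC.1

lemma subset_bag_of_mem_botInterval (hS : ∃ C, IsInBranch G l X S C) {t : ℕ}
    (ht : t ∈ botInterval G l X S) : S ⊆ X t := by
  obtain ⟨C, hC, hCstart⟩ := exists_isInBranch_firstIdx_eq_botStart hS
  obtain ⟨D, hD, hDend⟩ := exists_isInBranch_lastIdx_eq_botEnd hS
  have hstart : S ⊆ X (botStart G l X S) := hCstart ▸ hC.2.1
  have hend : S ⊆ X (botEnd G l X S) := hDend ▸ hD.2.2
  have hlt : botEnd G l X S < l :=
    hP.botInterval_subset_Iio hS (Set.right_mem_Icc.2 (ht.1.trans ht.2))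
  exact fun s hs => hP.mem_bag_of_le_of_le (hstart hs) (hend hs) hlt ht.1 ht.2

lemma botInterval_subset_of_forall_supp_subset (hS : ∃ C, IsInBranch G l X S C) {J : Set ℕ}
    (hJ : J.OrdConnected) (h : ∀ C, IsInBranch G l X S C → supp l X C ⊆ J) :
    botInterval G l X S ⊆ J := by
  obtain ⟨C, hC, hCstart⟩ := hP.exists_isInBranch_botStart_mem_supp hS
  obtain ⟨D, hD, hDend⟩ := hP.exists_isInBranch_botEnd_mem_supp hS
  exact hJ.out (h C hC hCstart) (h D hD hDend)

end IsPathDecomp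

end InBranches

section Structured

variable {G : SimpleGraph V} {l : ℕ} {X : ℕ → Set V} {S C : Set V}

lemma IsStructured.isInBranch_of_not_waitsIn (hstr : IsStructured G l X S)
    (hP : IsPathDecomp G l X) (hS : ∃ C, IsInBranch G l X S C) (hC : IsCompOf G S C)
    (hwait : ¬ WaitsIn X C (botStart G l X S) (botEnd G l X S)) : IsInBranch G l X S C := by
  by_contra hin
  have hbranch : IsBranch G S C := by
    by_contra hbranch
    exact hwait (hstr C (Or.inl ⟨hC, hbranch⟩))
  have hstart : botStart G l X S ≤ firstIdx l X C := by
    by_contra! hpre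
    exact hwait (hstr C (Or.inr (Or.inl ⟨hbranch, hin, hpre⟩)))
  have hend : lastIdx l X C ≤ botEnd G l X S := by
    by_contra! hpost
    exact hwait (hstr C (Or.inr (Or.inr ⟨hbranch, hin, hstart, hpost⟩)))
  have hle : firstIdx l X C ≤ lastIdx l X C := le_lastIdx (hP.firstIdx_mem_supp hC.1)
  exact hin ⟨hbranch, hP.subset_bag_of_mem_botInterval hS ⟨hstart, hle.trans hend⟩,
    hP.subset_bag_of_mem_botInterval hS ⟨hstart.trans hle, hend⟩⟩

lemma IsStructured.exists_isInBranch_mem (hstr : IsStructured G l X S)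
    (hP : IsPathDecomp G l X) (hS : ∃ C, IsInBranch G l X S C) {v : V} {i j : ℕ}
    (hi : i ∈ botInterval G l X S) (hj : j ∈ botInterval G l X S)
    (hvi : v ∈ X i) (hvj : v ∉ X j) : ∃ C, IsInBranch G l X S C ∧ v ∈ C := by
  have hvS : v ∈ Sᶜ := fun hvS => hvj (hP.subset_bag_of_mem_botInterval hS hj hvS)
  obtain ⟨C, hC, hvC⟩ := exists_isCompIn_mem G hvS
  refine ⟨C, hstr.isInBranch_of_not_waitsIn hP hS hC fun hwait => ?_, hvC⟩
  have hbags : C ∩ X i = C ∩ X j := (hwait i hi.1 hi.2).trans (hwait j hj.1 hj.2).symm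
  exact hvj (hbags.subset ⟨hvC, hvi⟩).2

end Structured

section Counting

variable {G : SimpleGraph V} {l k : ℕ} {X : ℕ → Set V} {S C D : Set V}

lemma encard_le_encard_of_pairwiseDisjoint {α : Type*} {F : Set (Set α)} {B : Set α}
    (hF : F.PairwiseDisjoint id) (hB : ∀ A ∈ F, (A ∩ B).Nonempty) : F.encard ≤ B.encard := by
  choose f hfA hfB using hB
  have hinj : Function.Injective fun A : F => (⟨f A A.2, hfB A A.2⟩ : B) := by
    rintro ⟨A, hA⟩ ⟨A', hA'⟩ h
    have hf : f A hA = f A' hA' := congrArg Subtype.val h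
    exact Subtype.ext (hF.elim_set hA hA' (f A hA) (hfA A hA) (hf ▸ hfA A' hA'))
  exact Function.Embedding.encard_le ⟨_, hinj⟩

lemma encard_le_encard_bag {F : Set (Set V)} (hF : ∀ C ∈ F, IsBranch G S C) {t : ℕ}
    (ht : ∀ C ∈ F, t ∈ supp l X C) : F.encard ≤ (X t).encard :=
  encard_le_encard_of_pairwiseDisjoint
    (fun C hC D hD hne => Set.disjoint_iff_inter_eq_empty.2 <| Set.not_nonempty_iff_eq_empty.1
      fun h => hne ((hF C hC).1.eq_of_inter_nonempty (hF D hD).1 h))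
    fun C hC => (ht C hC).2

namespace IsPathDecomp

variable (hP : IsPathDecomp G l X)
include hP

lemma firstIdx_mem_supp_of_le (hC : IsBranch G S C) (hD : IsBranch G S D)
    (hle : firstIdx l X C ≤ firstIdx l X D) (hSD : ¬ S ⊆ X (firstIdx l X D)) :
    firstIdx l X D ∈ supp l X C := by
  obtain ⟨s, hs, hsD⟩ := Set.not_subset.1 hSD
  obtain ⟨i, hi, hsi⟩ := hP.exists_mem_supp_of_isBranch hC hs
  obtain ⟨j, hj, hsj⟩ := hP.exists_mem_supp_of_isBranch hD hs
  have hDi : firstIdx l X D ≤ i := by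
    by_contra! hiD
    exact hsD (hP.mem_bag_of_le_of_le hsi hsj hj.1 hiD.le (firstIdx_le hj))
  exact (hP.ordConnected_supp hC.preconnected).out (hP.firstIdx_mem_supp hC.nonempty) hi
    ⟨hle, hDi⟩

lemma lastIdx_mem_supp_of_le (hC : IsBranch G S C) (hD : IsBranch G S D)
    (hle : lastIdx l X D ≤ lastIdx l X C) (hSD : ¬ S ⊆ X (lastIdx l X D)) :
    lastIdx l X D ∈ supp l X C := by
  obtain ⟨s, hs, hsD⟩ := Set.not_subset.1 hSD
  obtain ⟨i, hi, hsi⟩ := hP.exists_mem_supp_of_isBranch hC hs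
  obtain ⟨j, hj, hsj⟩ := hP.exists_mem_supp_of_isBranch hD hs
  have hiD : i ≤ lastIdx l X D := by
    by_contra! hDi
    exact hsD (hP.mem_bag_of_le_of_le hsj hsi hi.1 (le_lastIdx hj) hDi.le)
  exact (hP.ordConnected_supp hC.preconnected).out hi (hP.lastIdx_mem_supp hC.nonempty)
    ⟨hiD, hle⟩

lemma encard_isBranch_not_subset_firstIdx_le {n : ℕ∞} (hX : ∀ t < l, (X t).encard ≤ n) :
    {C | IsBranch G S C ∧ ¬ S ⊆ X (firstIdx l X C)}.encard ≤ n := by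
  set F := {C | IsBranch G S C ∧ ¬ S ⊆ X (firstIdx l X C)}
  obtain hF | hF := F.eq_empty_or_nonempty
  · simp only [hF, Set.encard_empty, zero_le]
  have hfin : (firstIdx l X '' F).Finite := (Set.finite_Iio l).subset <|
    Set.image_subset_iff.2 fun C hC => (hP.firstIdx_mem_supp hC.1.nonempty).1
  obtain ⟨D, hD, hmax⟩ := hfin.exists_maximalFor' _ _ hF
  have hmem : ∀ C ∈ F, firstIdx l X D ∈ supp l X C := fun C hC =>
    hP.firstIdx_mem_supp_of_le hC.1 hD.1 (le_of_not_gt fun h => h.not_ge (hmax hC h.le)) hD.2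
  exact (encard_le_encard_bag (fun C hC => hC.1) hmem).trans (hX _ (hmem D hD).1)

lemma encard_isBranch_not_subset_lastIdx_le {n : ℕ∞} (hX : ∀ t < l, (X t).encard ≤ n) :
    {C | IsBranch G S C ∧ ¬ S ⊆ X (lastIdx l X C)}.encard ≤ n := by
  set F := {C | IsBranch G S C ∧ ¬ S ⊆ X (lastIdx l X C)}
  obtain hF | hF := F.eq_empty_or_nonempty
  · simp only [hF, Set.encard_empty, zero_le]
  obtain ⟨D, hD, hmin⟩ := exists_minimalFor_of_wellFoundedLT (· ∈ F) (lastIdx l X) hF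
  have hmem : ∀ C ∈ F, lastIdx l X D ∈ supp l X C := fun C hC =>
    hP.lastIdx_mem_supp_of_le hC.1 hD.1 (le_of_not_gt fun h => h.not_ge (hmin hC h.le)) hD.2
  exact (encard_le_encard_bag (fun C hC => hC.1) hmem).trans (hX _ (hmem D hD).1)

end IsPathDecomp

lemma IsBottleneck.exists_isInBranch (hS : IsBottleneck G k S) (hP : IsPathDecomp G l X)
    (hX : ∀ t < l, (X t).encard ≤ k) : ∃ C, IsInBranch G l X S C := by
  by_contra! hno
  have hcover : {C | IsBranch G S C} ⊆ {C | IsBranch G S C ∧ ¬ S ⊆ X (firstIdx l X C)} ∪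
      {C | IsBranch G S C ∧ ¬ S ⊆ X (lastIdx l X C)} := by
    intro C hC
    by_cases hfirst : S ⊆ X (firstIdx l X C)
    · exact Or.inr ⟨hC, fun hlast => hno C ⟨hC, hfirst, hlast⟩⟩
    · exact Or.inl ⟨hC, hfirst⟩
  have hcard : ((2 * k + 1 : ℕ) : ℕ∞) ≤ (k + k : ℕ) := calc
    ((2 * k + 1 : ℕ) : ℕ∞) ≤ {C | IsBranch G S C}.ncard := by exact_mod_cast hS.2
    _ ≤ {C | IsBranch G S C}.encard := Set.ncard_le_encard _
    _ ≤ _ := (Set.encard_le_encard hcover).trans (Set.encard_union_le _ _)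
    _ ≤ k + k := add_le_add (hP.encard_isBranch_not_subset_firstIdx_le hX)
        (hP.encard_isBranch_not_subset_lastIdx_le hX)
    _ = (k + k : ℕ) := (Nat.cast_add k k).symm
  have : 2 * k + 1 ≤ k + k := by exact_mod_cast hcard
  omega

lemma encard_bag_le_of_pdWidth_le [Finite V] (hk : 1 ≤ k) (hw : pdWidth l X ≤ k - 1) {t : ℕ}
    (ht : t < l) : (X t).encard ≤ k := by
  have hsup : (X t).ncard ≤ (Finset.range l).sup fun i => (X i).ncard :=
    Finset.le_sup (f := fun i => (X i).ncard) (Finset.mem_range.2 ht)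
  rw [← (X t).toFinite.cast_ncard_eq, Nat.cast_le]
  unfold pdWidth at hw
  omega

end Counting

section WellNested

variable {G : SimpleGraph V} {l : ℕ} {X : ℕ → Set V} {S S' : Set V}

lemma left_mem_Icc_or_right_mem_Icc {α : Type*} [LinearOrder α] {a b a' b' : α}
    (hinter : (Set.Icc a b ∩ Set.Icc a' b').Nonempty)
    (hsub : ¬ Set.Icc a' b' ⊆ Set.Icc a b) : a ∈ Set.Icc a' b' ∨ b ∈ Set.Icc a' b' := by
  obtain ⟨t, ⟨hat, htb⟩, hat', htb'⟩ := hinter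
  by_contra! h
  have ha : a < a' := lt_of_not_ge fun h' => h.1 ⟨h', hat.trans htb'⟩
  have hb : b' < b := lt_of_not_ge fun h' => h.2 ⟨hat'.trans htb, h'⟩
  exact hsub (Set.Icc_subset_Icc ha.le hb.le)

lemma IsPathDecomp.exists_isInBranch_supp_inter_botInterval_nonempty (hP : IsPathDecomp G l X)
    (hS : ∃ C, IsInBranch G l X S C)
    (hinter : (botInterval G l X S ∩ botInterval G l X S').Nonempty)
    (hsub : ¬ botInterval G l X S' ⊆ botInterval G l X S) :
    ∃ C, IsInBranch G l X S C ∧ (supp l X C ∩ botInterval G l X S').Nonempty := by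
  obtain hstart | hend := left_mem_Icc_or_right_mem_Icc hinter hsub
  · obtain ⟨C, hC, hmem⟩ := hP.exists_isInBranch_botStart_mem_supp hS
    exact ⟨C, hC, _, hmem, hstart⟩
  · obtain ⟨C, hC, hmem⟩ := hP.exists_isInBranch_botEnd_mem_supp hS
    exact ⟨C, hC, _, hmem, hend⟩

lemma IsInBranch.subset_compl_of_notMem_botInterval {C : Set V} (hC : IsInBranch G l X S' C)
    {t : ℕ} (htl : t < l) (ht : t ∉ botInterval G l X S') (hSt : S ⊆ X t) : C ⊆ Sᶜ :=
  fun s hsC hsS => ht (hC.supp_subset_botInterval ⟨htl, s, hsC, hSt hsS⟩)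

theorem stmt10_general (hP : IsPathDecomp G l X) (hS : ∃ C, IsInBranch G l X S C)
    (hS' : ∃ C, IsInBranch G l X S' C) (hstr : IsStructured G l X S') :
    botInterval G l X S' ⊂ botInterval G l X S ∨
    botInterval G l X S ⊆ botInterval G l X S' ∨
    botInterval G l X S ∩ botInterval G l X S' = ∅ := by
  by_contra! ⟨hnssub, hnsub, hinter⟩
  have hnsub' : ¬ botInterval G l X S' ⊆ botInterval G l X S := fun h => hnssub ⟨h, hnsub⟩
  obtain ⟨t, htS, htS'⟩ := Set.not_subset.1 hnsub
  obtain ⟨u, huS', huS⟩ := Set.not_subset.1 hnsub'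
  obtain ⟨H, hH, i, ⟨-, v, hvH, hvi⟩, hiS'⟩ :=
    hP.exists_isInBranch_supp_inter_botInterval_nonempty hS hinter hnsub'
  have hvu : v ∉ X u := fun hvu =>
    huS (hH.supp_subset_botInterval ⟨hP.botInterval_subset_Iio hS' huS', v, hvH, hvu⟩)
  obtain ⟨K, hK, hvK⟩ := hstr.exists_isInBranch_mem hP hS' hiS' huS' hvi hvu
  obtain ⟨L, hL, hLS⟩ : ∃ L, IsInBranch G l X S' L ∧ ¬ supp l X L ⊆ botInterval G l X S := by
    by_contra! h
    exact hnsub' (hP.botInterval_subset_of_forall_supp_subset hS' Set.ordConnected_Icc h)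
  have hdisj : ∀ C, IsInBranch G l X S' C → C ⊆ Sᶜ := fun C hC =>
    hC.subset_compl_of_notMem_botInterval (hP.botInterval_subset_Iio hS htS) htS'
      (hP.subset_bag_of_mem_botInterval hS htS)
  have hLH : ¬ L ⊆ H := fun h => hLS ((supp_mono h).trans hH.supp_subset_botInterval)
  have hSS' : S = S' := hH.1.eq_of_inter_nonempty_of_not_subset hK.1 hL.1
    (hdisj K hK) (hdisj L hL) ⟨v, hvH, hvK⟩ hLH
  exact htS' (hSS' ▸ htS)

end WellNested

/-- if an `I`-connected path decomposition of width at most `k-1`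
is `S'`-structured, then the bottlenecks `S` and `S'` are well-nested. -/
theorem stmt10 [Fintype V] (k : ℕ) (hk : 1 ≤ k) (G : SimpleGraph V) (I : Set V)
    (l : ℕ) (X : ℕ → Set V) (hP : IsPathDecomp G l X) (hIc : IsIConn G l X I)
    (hw : pdWidth l X ≤ k - 1)
    (S S' : Set V) (hS : IsBottleneck G k S) (hS' : IsBottleneck G k S')
    (hstr : IsStructured G l X S') :
    botInterval G l X S' ⊂ botInterval G l X S ∨
    botInterval G l X S ⊆ botInterval G l X S' ∨
    botInterval G l X S ∩ botInterval G l X S' = ∅ := by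
  have hX : ∀ t < l, (X t).encard ≤ k := fun _ => encard_bag_le_of_pdWidth_le hk hw
  exact stmt10_general hP (hS.exists_isInBranch hP hX) (hS'.exists_isInBranch hP hX) hstr
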